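/- Let q1, q2 > 0 with Q = 1/q1 + 1/q2 and γ0 = q1/q2, let 0 < α ≤ 2 and −Q/α < χ < 1/max{q1,q2} − Q/α with χ < 0. Suppose g0 : ℝ²∖{0} → ℝ satisfies |g0(t)| ≤ C ρ(t)^χ and |∂_i g0(t)| ≤ C ρ(t)^{χ−1/q_i} (i = 1,2) for all t ≠ 0, where ρ(t) = |t1|^{q1}+|t2|^{q2}. Then for every t ∈ ℝ², the increment h0(t;u) := g0(t−u) − g0(−u) satisfies ∫_{ℝ²} |h0(t;u)|^α du < ∞. -/

import Mathlib

open MeasureTheory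

/-- `ρ(t) = |t₁|^{q₁} + |t₂|^{q₂}`. -/
noncomputable def rho (q1 q2 : ℝ) (t : ℝ × ℝ) : ℝ := |t.1| ^ q1 + |t.2| ^ q2

/-!
Write `Q = 1/q₁ + 1/q₂`. Since `|u₁| |u₂| ≤ ρ(u)^Q`, a power `ρ^r` is controlled by a product of
one-variable powers, so it is locally integrable for `r > -Q` and integrable at infinity for
`r < -Q`. Locally, `|g₀(t - u) - g₀(-u)|^α` is bounded by the two summands, each at most a multiple
of a translate of `ρ^{αχ}`, and `αχ > -Q`. At infinity, `ρ` stays comparable to `ρ(u)` on the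
rectangle `-u + [-|t₁|, |t₁|] × [-|t₂|, |t₂|]`, so the mean value inequality along its axis-parallel
segments bounds the increment by a multiple of `ρ(u)^e` with `e = χ - 1/max(q₁, q₂)`, and `αe < -Q`.
-/

open Filter Asymptotics

section RealPowers

lemma abs_sub_rpow_le {p : ℝ} (hp : 0 ≤ p) (a b : ℝ) :
    |a - b| ^ p ≤ 2 ^ p * (|a| ^ p + |b| ^ p) := by
  have hab : |a - b| ≤ 2 * max |a| |b| := by
    linarith [abs_sub a b, le_max_left |a| |b|, le_max_right |a| |b|]
  calc |a - b| ^ p ≤ (2 * max |a| |b|) ^ p := Real.rpow_le_rpow (abs_nonneg _) hab hp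
    _ = 2 ^ p * max |a| |b| ^ p := Real.mul_rpow zero_le_two (by positivity)
    _ ≤ 2 ^ p * (|a| ^ p + |b| ^ p) := by
        gcongr
        rcases max_choice |a| |b| with h | h <;> rw [h]
        · exact le_add_of_nonneg_right (by positivity)
        · exact le_add_of_nonneg_left (by positivity)

lemma rpow_le_rpow_neg_mul_rpow {x y K d e : ℝ} (hx : 0 < x) (hy : 1 ≤ y) (hK : 0 < K)
    (hxy : x ≤ K * y) (hde : d ≤ e) (he : e ≤ 0) : y ^ d ≤ K ^ (-e) * x ^ e := by
  have hy0 : 0 ≤ y := zero_le_one.trans hy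
  calc y ^ d ≤ y ^ e := Real.rpow_le_rpow_of_exponent_le hy hde
    _ = K ^ (-e) * (K * y) ^ e := by
        rw [Real.mul_rpow hK.le hy0, ← mul_assoc, ← Real.rpow_add hK, neg_add_cancel,
          Real.rpow_zero, one_mul]
    _ ≤ K ^ (-e) * x ^ e :=
        mul_le_mul_of_nonneg_left (Real.rpow_le_rpow_of_nonpos hx hxy he) (by positivity)

lemma rpow_le_mul_rpow_of_mul_le_mul_rpow {x y z c Q r : ℝ} (hx : 0 < x) (hy : 0 < y)
    (hz : 0 ≤ z) (hc : 0 < c) (hQ : 0 < Q) (hr : r ≤ 0) (h : x * y ≤ c * z ^ Q) :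
    z ^ r ≤ c ^ (-(r / Q)) * (x ^ (r / Q) * y ^ (r / Q)) := by
  have hrQ : r / Q ≤ 0 := div_nonpos_of_nonpos_of_nonneg hr hQ.le
  have hpow : c ^ (r / Q) * z ^ r ≤ x ^ (r / Q) * y ^ (r / Q) := by
    calc c ^ (r / Q) * z ^ r = (c * z ^ Q) ^ (r / Q) := by
          rw [Real.mul_rpow hc.le (by positivity), ← Real.rpow_mul hz, mul_div_cancel₀ _ hQ.ne']
      _ ≤ (x * y) ^ (r / Q) := Real.rpow_le_rpow_of_nonpos (mul_pos hx hy) h hrQ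
      _ = x ^ (r / Q) * y ^ (r / Q) := Real.mul_rpow hx.le hy.le
  rwa [Real.rpow_neg hc.le, ← div_eq_inv_mul, le_div_iff₀' (by positivity)]

end RealPowers

section LocalIntegrability

lemma locallyIntegrable_mul_prod {X Y : Type*} [TopologicalSpace X] [TopologicalSpace Y]
    [MeasurableSpace X] [MeasurableSpace Y] {μ : Measure X} {ν : Measure Y} [SFinite μ]
    [SFinite ν] {f : X → ℝ} {g : Y → ℝ} (hf : LocallyIntegrable f μ)
    (hg : LocallyIntegrable g ν) :
    LocallyIntegrable (fun z : X × Y => f z.1 * g z.2) (μ.prod ν) := fun z => by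
  obtain ⟨U, hU, hfU⟩ := hf z.1
  obtain ⟨V, hV, hgV⟩ := hg z.2
  refine ⟨U ×ˢ V, prod_mem_nhds hU hV, ?_⟩
  rw [IntegrableOn, ← Measure.prod_restrict]
  exact hfU.mul_prod hgV

lemma locallyIntegrable_comp_sub_left {G E : Type*} [TopologicalSpace G] [AddGroup G]
    [IsTopologicalAddGroup G] [MeasurableSpace G] [BorelSpace G] [NormedAddCommGroup E]
    {μ : Measure G} [μ.IsAddLeftInvariant] [μ.IsNegInvariant] {f : G → E}
    (hf : LocallyIntegrable f μ) (t : G) : LocallyIntegrable (fun u => f (t - u)) μ := by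
  rw [← (μ.measurePreserving_sub_left t).map_eq] at hf
  exact (locallyIntegrable_map_homeomorph (Homeomorph.subLeft t)).1 hf

lemma locallyIntegrable_abs_sub_rpow {X : Type*} [TopologicalSpace X] [MeasurableSpace X]
    {μ : Measure X} {f g : X → ℝ} {p : ℝ} (hp : 0 ≤ p)
    (hf : AEStronglyMeasurable f μ) (hg : AEStronglyMeasurable g μ)
    (hfp : LocallyIntegrable (fun x => |f x| ^ p) μ)
    (hgp : LocallyIntegrable (fun x => |g x| ^ p) μ) :
    LocallyIntegrable (fun x => |f x - g x| ^ p) μ := by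
  refine ((hfp.add hgp).smul ((2 : ℝ) ^ p)).mono ?_ (.of_forall fun x => ?_)
  · exact ((hf.sub hg).aemeasurable.abs.pow_const p).aestronglyMeasurable
  · exact (Real.norm_of_nonneg (by positivity)).trans_le
      ((abs_sub_rpow_le hp (f x) (g x)).trans (Real.le_norm_self _))

lemma locallyIntegrable_abs_rpow {r : ℝ} (hr : -1 < r) :
    LocallyIntegrable (fun x : ℝ => |x| ^ r) := by
  refine locallyIntegrable_of_norm_le_rpow (C := 1) (α := -r) (by simp) (by simp; linarith)
    (.of_forall fun x => ?_)
    (measurable_id.abs.pow_const r).aestronglyMeasurable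
  simp [abs_of_nonneg (Real.rpow_nonneg (abs_nonneg x) r)]

end LocalIntegrability

lemma aestronglyMeasurable_prod_of_continuous_of_continuousOn {X Y : Type*}
    [TopologicalSpace X] [TopologicalSpace.MetrizableSpace X] [SecondCountableTopology X]
    [MeasurableSpace X] [OpensMeasurableSpace X] [TopologicalSpace Y] [MeasurableSpace Y]
    [OpensMeasurableSpace Y] {μ : Measure X} {ν : Measure Y} {g : X × Y → ℝ}
    {s : Set Y} (hs : MeasurableSet s) (hνs : ∀ᵐ y ∂ν, y ∈ s)
    (hX : ∀ y ∈ s, Continuous fun x => g (x, y))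
    (hY : ∀ x, ContinuousOn (fun y => g (x, y)) s) :
    AEStronglyMeasurable g (μ.prod ν) := by
  classical
  let u : X → Y → ℝ := fun x => s.piecewise (fun y => g (x, y)) 0
  have hu : Measurable (Function.uncurry u) := by
    refine measurable_uncurry_of_continuous_of_measurable (fun y => ?_) fun x =>
      (hY x).measurable_piecewise continuousOn_const hs
    by_cases hy : y ∈ s
    · simpa [u, hy] using hX y hy
    · simpa [u, hy] using continuous_const
  refine ⟨Function.uncurry u, hu.stronglyMeasurable, ?_⟩
  filter_upwards [Measure.quasiMeasurePreserving_snd.ae hνs] with z hz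
  simp [u, Function.uncurry, hz]

section MeanValue

lemma abs_sub_le_of_abs_deriv_le {f : ℝ → ℝ} {t x M : ℝ}
    (hf : ∀ y, |y + x| ≤ |t| → DifferentiableAt ℝ f y ∧ |deriv f y| ≤ M) :
    |f (t - x) - f (-x)| ≤ M * |t| := by
  have hball : ∀ y ∈ Metric.closedBall (-x) |t|, |y + x| ≤ |t| := fun y hy => by
    simpa [Real.dist_eq] using hy
  simpa using (convex_closedBall (-x) |t|).norm_image_sub_le_of_norm_deriv_le
    (fun y hy => (hf y (hball y hy)).1) (fun y hy => (hf y (hball y hy)).2)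
    (x := -x) (y := t - x) (by simp) (by simp)

lemma abs_increment_le_of_abs_partialDeriv_le {g : ℝ × ℝ → ℝ} {t u : ℝ × ℝ} {M : ℝ}
    (h1 : ∀ w : ℝ × ℝ, |w.1 + u.1| ≤ |t.1| → |w.2 + u.2| ≤ |t.2| →
      DifferentiableAt ℝ (fun x => g (x, w.2)) w.1 ∧ |deriv (fun x => g (x, w.2)) w.1| ≤ M)
    (h2 : ∀ w : ℝ × ℝ, |w.1 + u.1| ≤ |t.1| → |w.2 + u.2| ≤ |t.2| →
      DifferentiableAt ℝ (fun y => g (w.1, y)) w.2 ∧ |deriv (fun y => g (w.1, y)) w.2| ≤ M) :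
    |g (t - u) - g (-u)| ≤ M * (|t.1| + |t.2|) := by
  have hfst : |g (t.1 - u.1, t.2 - u.2) - g (-u.1, t.2 - u.2)| ≤ M * |t.1| :=
    abs_sub_le_of_abs_deriv_le (f := fun x => g (x, t.2 - u.2))
      fun x hx => h1 (x, t.2 - u.2) hx (by simp)
  have hsnd : |g (-u.1, t.2 - u.2) - g (-u.1, -u.2)| ≤ M * |t.2| :=
    abs_sub_le_of_abs_deriv_le (f := fun y => g (-u.1, y))
      fun y hy => h2 (-u.1, y) (by simp) hy
  rw [mul_add]
  exact (abs_sub_le _ _ _).trans (add_le_add hfst hsnd)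

end MeanValue

section Rho

variable {q1 q2 : ℝ}

lemma rho_nonneg (u : ℝ × ℝ) : 0 ≤ rho q1 q2 u := by
  unfold rho
  positivity

lemma rho_pos {u : ℝ × ℝ} (hu : u ≠ 0) : 0 < rho q1 q2 u := by
  rcases not_and_or.1 (mt Prod.ext_iff.2 hu) with h | h
  · exact add_pos_of_pos_of_nonneg (Real.rpow_pos_of_pos (abs_pos.2 h) _) (by positivity)
  · exact add_pos_of_nonneg_of_pos (by positivity) (Real.rpow_pos_of_pos (abs_pos.2 h) _)

lemma rho_zero (hq1 : q1 ≠ 0) (hq2 : q2 ≠ 0) : rho q1 q2 0 = 0 := by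
  simp [rho, Real.zero_rpow, hq1, hq2]

lemma continuous_rho (hq1 : 0 ≤ q1) (hq2 : 0 ≤ q2) : Continuous (rho q1 q2) :=
  (continuous_fst.abs.rpow_const fun _ => .inr hq1).add
    (continuous_snd.abs.rpow_const fun _ => .inr hq2)

lemma measurable_rho : Measurable (rho q1 q2) := by
  unfold rho
  fun_prop

lemma rho_le_rho_of_abs_le (hq1 : 0 ≤ q1) (hq2 : 0 ≤ q2) {s t : ℝ × ℝ}
    (h1 : |s.1| ≤ |t.1|) (h2 : |s.2| ≤ |t.2|) : rho q1 q2 s ≤ rho q1 q2 t := by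
  unfold rho
  gcongr

lemma rho_sub_le (hq1 : 0 ≤ q1) (hq2 : 0 ≤ q2) (s t : ℝ × ℝ) :
    rho q1 q2 (s - t) ≤ 2 ^ max q1 q2 * (rho q1 q2 s + rho q1 q2 t) := by
  calc rho q1 q2 (s - t)
      ≤ 2 ^ q1 * (|s.1| ^ q1 + |t.1| ^ q1) + 2 ^ q2 * (|s.2| ^ q2 + |t.2| ^ q2) :=
        add_le_add (abs_sub_rpow_le hq1 _ _) (abs_sub_rpow_le hq2 _ _)
    _ ≤ 2 ^ max q1 q2 * (|s.1| ^ q1 + |t.1| ^ q1) +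
          2 ^ max q1 q2 * (|s.2| ^ q2 + |t.2| ^ q2) := by
        gcongr
        exacts [one_le_two, le_max_left _ _, one_le_two, le_max_right _ _]
    _ = 2 ^ max q1 q2 * (rho q1 q2 s + rho q1 q2 t) := by
        unfold rho
        ring

lemma rho_le_mul_rho_of_abs_add_le (hq1 : 0 ≤ q1) (hq2 : 0 ≤ q2) {t u w : ℝ × ℝ}
    (hu : 2 * 2 ^ max q1 q2 * rho q1 q2 t ≤ rho q1 q2 u)
    (h1 : |w.1 + u.1| ≤ |t.1|) (h2 : |w.2 + u.2| ≤ |t.2|) :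
    rho q1 q2 u ≤ 2 * 2 ^ max q1 q2 * rho q1 q2 w := by
  have hquasi : rho q1 q2 u ≤ 2 ^ max q1 q2 * (rho q1 q2 t + rho q1 q2 w) := by
    calc rho q1 q2 u = rho q1 q2 (w + u - w) := by rw [add_sub_cancel_left]
      _ ≤ 2 ^ max q1 q2 * (rho q1 q2 (w + u) + rho q1 q2 w) := rho_sub_le hq1 hq2 _ _
      _ ≤ 2 ^ max q1 q2 * (rho q1 q2 t + rho q1 q2 w) := by
          gcongr
          exact rho_le_rho_of_abs_le hq1 hq2 h1 h2
  linarith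

lemma abs_fst_le_rho_rpow (hq1 : 0 < q1) (u : ℝ × ℝ) : |u.1| ≤ rho q1 q2 u ^ (1 / q1) := by
  rw [one_div, Real.le_rpow_inv_iff_of_pos (abs_nonneg _) (rho_nonneg u) hq1]
  exact le_add_of_nonneg_right (by positivity)

lemma abs_snd_le_rho_rpow (hq2 : 0 < q2) (u : ℝ × ℝ) : |u.2| ≤ rho q1 q2 u ^ (1 / q2) := by
  rw [one_div, Real.le_rpow_inv_iff_of_pos (abs_nonneg _) (rho_nonneg u) hq2]
  exact le_add_of_nonneg_left (by positivity)

lemma tendsto_rho_cocompact (hq1 : 0 < q1) (hq2 : 0 < q2) :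
    Tendsto (rho q1 q2) (cocompact (ℝ × ℝ)) atTop := by
  have tendsto_abs_rpow {q : ℝ} (hq : 0 < q) :
      Tendsto (fun x : ℝ => |x| ^ q) (cocompact ℝ) atTop :=
    (tendsto_rpow_atTop hq).comp tendsto_norm_cocompact_atTop
  rw [← coprod_cocompact]
  refine tendsto_sup.2 ⟨?_, ?_⟩
  · exact tendsto_atTop_mono (fun u => le_add_of_nonneg_right (by positivity))
      ((tendsto_abs_rpow hq1).comp tendsto_comap)
  · exact tendsto_atTop_mono (fun u => le_add_of_nonneg_left (by positivity))
      ((tendsto_abs_rpow hq2).comp tendsto_comap)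

lemma locallyIntegrable_rho_rpow (hq1 : 0 < q1) (hq2 : 0 < q2) {r : ℝ}
    (hr : -(1 / q1 + 1 / q2) < r) : LocallyIntegrable (fun u => rho q1 q2 u ^ r) := by
  rcases le_total 0 r with hr0 | hr0
  · exact ((continuous_rho hq1.le hq2.le).rpow_const fun _ => .inr hr0).locallyIntegrable
  have hQ : 0 < 1 / q1 + 1 / q2 := by positivity
  have hrQ : -1 < r / (1 / q1 + 1 / q2) := by rwa [lt_div_iff₀ hQ, neg_one_mul]
  have hprod := locallyIntegrable_abs_rpow hrQ
  have hfst : ∀ᵐ u : ℝ × ℝ, u.1 ≠ 0 :=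
    Measure.quasiMeasurePreserving_fst.ae (Measure.ae_ne volume (0 : ℝ))
  have hsnd : ∀ᵐ u : ℝ × ℝ, u.2 ≠ 0 :=
    Measure.quasiMeasurePreserving_snd.ae (Measure.ae_ne volume (0 : ℝ))
  refine (locallyIntegrable_mul_prod hprod hprod).mono
    (measurable_rho.pow_const r).aestronglyMeasurable ?_
  filter_upwards [hfst, hsnd] with u h1 h2
  have hu : u ≠ 0 := fun h => h1 (congrArg Prod.fst h)
  have hmul : |u.1| * |u.2| ≤ 1 * rho q1 q2 u ^ (1 / q1 + 1 / q2) := by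
    rw [one_mul, Real.rpow_add (rho_pos hu)]
    exact mul_le_mul (abs_fst_le_rho_rpow hq1 u) (abs_snd_le_rho_rpow hq2 u) (abs_nonneg _)
      (Real.rpow_nonneg (rho_nonneg u) _)
  have hle := rpow_le_mul_rpow_of_mul_le_mul_rpow (abs_pos.2 h1) (abs_pos.2 h2) (rho_nonneg u)
    one_pos hQ hr0 hmul
  rw [Real.one_rpow, one_mul] at hle
  exact (Real.norm_of_nonneg (Real.rpow_nonneg (rho_nonneg u) r)).trans_le
    (hle.trans (Real.le_norm_self _))

lemma integrableOn_rho_rpow (hq1 : 0 < q1) (hq2 : 0 < q2) {r : ℝ}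
    (hr : r < -(1 / q1 + 1 / q2)) :
    IntegrableOn (fun u => rho q1 q2 u ^ r) {u | 1 ≤ rho q1 q2 u} := by
  have hQ : 0 < 1 / q1 + 1 / q2 := by positivity
  have hrQ : 1 < -(r / (1 / q1 + 1 / q2)) := by
    rw [← neg_div, lt_div_iff₀ hQ]
    linarith
  have hone : Integrable (fun x : ℝ => (1 + ‖x‖) ^ (r / (1 / q1 + 1 / q2))) := by
    rw [← neg_neg (r / (1 / q1 + 1 / q2))]
    exact integrable_one_add_norm (by rwa [Module.finrank_self, Nat.cast_one])
  refine ((hone.mul_prod hone).const_mul (4 ^ (-(r / (1 / q1 + 1 / q2))))).integrableOn.mono'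
    (measurable_rho.pow_const r).aestronglyMeasurable
    (ae_restrict_of_forall_mem (measurable_rho measurableSet_Ici) fun u hu => ?_)
  have hu : 1 ≤ rho q1 q2 u := hu
  have one_add_le {a q : ℝ} (hq : 0 < q) (ha : a ≤ rho q1 q2 u ^ (1 / q)) :
      1 + a ≤ 2 * rho q1 q2 u ^ (1 / q) := by
    linarith [Real.one_le_rpow hu (one_div_pos.2 hq).le]
  have hmul : (1 + ‖u.1‖) * (1 + ‖u.2‖) ≤ 4 * rho q1 q2 u ^ (1 / q1 + 1 / q2) := by
    calc (1 + ‖u.1‖) * (1 + ‖u.2‖)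
        ≤ (2 * rho q1 q2 u ^ (1 / q1)) * (2 * rho q1 q2 u ^ (1 / q2)) := by
          gcongr
          exacts [one_add_le hq1 (abs_fst_le_rho_rpow hq1 u),
            one_add_le hq2 (abs_snd_le_rho_rpow hq2 u)]
      _ = 4 * rho q1 q2 u ^ (1 / q1 + 1 / q2) := by
          rw [Real.rpow_add (zero_lt_one.trans_le hu)]
          ring
  rw [Real.norm_of_nonneg (Real.rpow_nonneg (rho_nonneg u) r)]
  exact rpow_le_mul_rpow_of_mul_le_mul_rpow (by positivity) (by positivity) (rho_nonneg u)
    four_pos hQ (by linarith) hmul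

lemma integrableAtFilter_cocompact_rho_rpow (hq1 : 0 < q1) (hq2 : 0 < q2) {r : ℝ}
    (hr : r < -(1 / q1 + 1 / q2)) :
    IntegrableAtFilter (fun u => rho q1 q2 u ^ r) (cocompact (ℝ × ℝ)) :=
  ⟨_, (tendsto_rho_cocompact hq1 hq2).eventually_ge_atTop 1, integrableOn_rho_rpow hq1 hq2 hr⟩

end Rho

section Increment

variable {q1 q2 χ C : ℝ} {g : ℝ × ℝ → ℝ}

lemma aestronglyMeasurable_of_partial_differentiableAt
    (hdiff : ∀ t : ℝ × ℝ, t ≠ 0 →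
      DifferentiableAt ℝ (fun x => g (x, t.2)) t.1 ∧
      DifferentiableAt ℝ (fun y => g (t.1, y)) t.2) :
    AEStronglyMeasurable g := by
  have hne : ∀ {x y : ℝ}, y ≠ 0 → (x, y) ≠ 0 := fun hy h => hy (congrArg Prod.snd h)
  refine aestronglyMeasurable_prod_of_continuous_of_continuousOn
    (measurableSet_singleton (0 : ℝ)).compl (Measure.ae_ne volume 0) (fun y hy => ?_)
    fun x y hy => ?_
  · exact continuous_iff_continuousAt.2 fun x => (hdiff (x, y) (hne hy)).1.continuousAt
  · exact (hdiff (x, y) (hne hy)).2.continuousAt.continuousWithinAt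

lemma locallyIntegrable_abs_rpow_of_abs_le_rho_rpow {α : ℝ} (hα : 0 < α) (hq1 : 0 < q1)
    (hq2 : 0 < q2) (hC : 0 ≤ C) (hχ : -(1 / q1 + 1 / q2) / α < χ)
    (hmeas : AEStronglyMeasurable g) (hg : ∀ t : ℝ × ℝ, t ≠ 0 → |g t| ≤ C * rho q1 q2 t ^ χ) :
    LocallyIntegrable (fun u => |g u| ^ α) := by
  have hαχ : -(1 / q1 + 1 / q2) < χ * α := (div_lt_iff₀ hα).1 hχ
  refine ((locallyIntegrable_rho_rpow hq1 hq2 hαχ).smul (C ^ α)).mono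
    (hmeas.aemeasurable.abs.pow_const α).aestronglyMeasurable ?_
  filter_upwards [Measure.ae_ne volume (0 : ℝ × ℝ)] with u hu
  have hρ : 0 ≤ rho q1 q2 u := rho_nonneg u
  calc ‖|g u| ^ α‖ = |g u| ^ α := Real.norm_of_nonneg (by positivity)
    _ ≤ (C * rho q1 q2 u ^ χ) ^ α := Real.rpow_le_rpow (abs_nonneg _) (hg u hu) hα.le
    _ = C ^ α * rho q1 q2 u ^ (χ * α) := by
        rw [Real.mul_rpow hC (by positivity), ← Real.rpow_mul hρ]
    _ ≤ ‖C ^ α * rho q1 q2 u ^ (χ * α)‖ := Real.le_norm_self _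

lemma isBigO_increment_rho_rpow (hq1 : 0 < q1) (hq2 : 0 < q2) (hC : 0 ≤ C)
    (hχ : χ ≤ 1 / max q1 q2)
    (hdiff : ∀ t : ℝ × ℝ, t ≠ 0 →
      DifferentiableAt ℝ (fun x => g (x, t.2)) t.1 ∧
      DifferentiableAt ℝ (fun y => g (t.1, y)) t.2)
    (hd1 : ∀ t : ℝ × ℝ, t ≠ 0 →
      |deriv (fun x => g (x, t.2)) t.1| ≤ C * rho q1 q2 t ^ (χ - 1 / q1))
    (hd2 : ∀ t : ℝ × ℝ, t ≠ 0 →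
      |deriv (fun y => g (t.1, y)) t.2| ≤ C * rho q1 q2 t ^ (χ - 1 / q2)) (t : ℝ × ℝ) :
    (fun u => g (t - u) - g (-u)) =O[cocompact (ℝ × ℝ)]
      fun u => rho q1 q2 u ^ (χ - 1 / max q1 q2) := by
  set e := χ - 1 / max q1 q2
  set K : ℝ := 2 * 2 ^ max q1 q2
  have hK0 : 0 < K := by positivity
  have he1 : χ - 1 / q1 ≤ e := sub_le_sub_left (one_div_le_one_div_of_le hq1 (le_max_left _ _)) χ
  have he2 : χ - 1 / q2 ≤ e := sub_le_sub_left (one_div_le_one_div_of_le hq2 (le_max_right _ _)) χ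
  refine .of_bound (C * K ^ (-e) * (|t.1| + |t.2|)) ?_
  have hρ := tendsto_rho_cocompact hq1 hq2
  filter_upwards [hρ.eventually_ge_atTop K, hρ.eventually_ge_atTop (K * rho q1 q2 t)]
    with u hKu htu
  have hu : 0 < rho q1 q2 u := hK0.trans_le hKu
  have near {w : ℝ × ℝ} (h1 : |w.1 + u.1| ≤ |t.1|) (h2 : |w.2 + u.2| ≤ |t.2|) :
      w ≠ 0 ∧ ∀ d ≤ e, C * rho q1 q2 w ^ d ≤ C * (K ^ (-e) * rho q1 q2 u ^ e) := by
    have huw := rho_le_mul_rho_of_abs_add_le hq1.le hq2.le htu h1 h2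
    have hw : 1 ≤ rho q1 q2 w := le_of_mul_le_mul_left (by linarith) hK0
    refine ⟨?_, fun d hd => mul_le_mul_of_nonneg_left
      (rpow_le_rpow_neg_mul_rpow hu hw hK0 huw hd (sub_nonpos.2 hχ)) hC⟩
    rintro rfl
    exact absurd hw (by rw [rho_zero hq1.ne' hq2.ne']; norm_num)
  calc ‖g (t - u) - g (-u)‖ ≤ C * (K ^ (-e) * rho q1 q2 u ^ e) * (|t.1| + |t.2|) :=
        abs_increment_le_of_abs_partialDeriv_le
          (fun w h1 h2 => have hw := near h1 h2
            ⟨(hdiff w hw.1).1, (hd1 w hw.1).trans (hw.2 _ he1)⟩)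
          (fun w h1 h2 => have hw := near h1 h2
            ⟨(hdiff w hw.1).2, (hd2 w hw.1).trans (hw.2 _ he2)⟩)
    _ = C * K ^ (-e) * (|t.1| + |t.2|) * ‖rho q1 q2 u ^ e‖ := by
        rw [Real.norm_of_nonneg (by positivity)]
        ring

end Increment

theorem stmt_19_general {α q1 q2 χ C : ℝ} (hα : 0 < α) (hq1 : 0 < q1) (hq2 : 0 < q2)
    (hχlow : -(1 / q1 + 1 / q2) / α < χ)
    (hχhigh : χ < 1 / max q1 q2 - (1 / q1 + 1 / q2) / α) {g : ℝ × ℝ → ℝ}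
    (hdiff : ∀ t : ℝ × ℝ, t ≠ 0 →
      DifferentiableAt ℝ (fun x => g (x, t.2)) t.1 ∧
      DifferentiableAt ℝ (fun y => g (t.1, y)) t.2)
    (hg : ∀ t : ℝ × ℝ, t ≠ 0 → |g t| ≤ C * rho q1 q2 t ^ χ)
    (hd1 : ∀ t : ℝ × ℝ, t ≠ 0 →
      |deriv (fun x => g (x, t.2)) t.1| ≤ C * rho q1 q2 t ^ (χ - 1 / q1))
    (hd2 : ∀ t : ℝ × ℝ, t ≠ 0 →
      |deriv (fun y => g (t.1, y)) t.2| ≤ C * rho q1 q2 t ^ (χ - 1 / q2)) (t : ℝ × ℝ) :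
    Integrable fun u => |g (t - u) - g (-u)| ^ α := by
  have hC : 0 ≤ C := nonneg_of_mul_nonneg_left ((abs_nonneg _).trans (hg (1, 0) (by simp)))
    (Real.rpow_pos_of_pos (rho_pos (by simp)) χ)
  have hQα : 0 < (1 / q1 + 1 / q2) / α := by positivity
  have he : (χ - 1 / max q1 q2) * α < -(1 / q1 + 1 / q2) := by
    rw [← lt_div_iff₀ hα, neg_div]
    linarith
  have hmeas := aestronglyMeasurable_of_partial_differentiableAt hdiff
  have hloc := locallyIntegrable_abs_rpow_of_abs_le_rho_rpow hα hq1 hq2 hC hχlow hmeas hg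
  have hlocal : LocallyIntegrable fun u => |g (t - u) - g (-u)| ^ α :=
    locallyIntegrable_abs_sub_rpow hα.le
      (hmeas.comp_measurePreserving (Measure.measurePreserving_sub_left volume t))
      (hmeas.comp_measurePreserving (Measure.measurePreserving_neg volume))
      (locallyIntegrable_comp_sub_left hloc t)
      (by simpa using locallyIntegrable_comp_sub_left hloc 0)
  have hinfty : (fun u => |g (t - u) - g (-u)| ^ α) =O[cocompact (ℝ × ℝ)]
      fun u => rho q1 q2 u ^ ((χ - 1 / max q1 q2) * α) := by
    simp only [Real.rpow_mul (rho_nonneg _)]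
    exact (isBigO_increment_rho_rpow hq1 hq2 hC (by linarith) hdiff hd1 hd2 t).norm_left.rpow
      hα.le (.of_forall fun u => Real.rpow_nonneg (rho_nonneg u) _)
  exact hlocal.integrable_of_isBigO_cocompact hinfty
    (integrableAtFilter_cocompact_rho_rpow hq1 hq2 he)

theorem stmt_19 (α q1 q2 χ C : ℝ) (hα0 : 0 < α) (hα2 : α ≤ 2)
    (hq1 : 0 < q1) (hq2 : 0 < q2) (hχneg : χ < 0)
    (hχlow : -(1 / q1 + 1 / q2) / α < χ)
    (hχhigh : χ < 1 / max q1 q2 - (1 / q1 + 1 / q2) / α)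
    (hC : 0 < C)
    (g0 : ℝ × ℝ → ℝ) (hmeas : Measurable g0)
    (hdiff : ∀ t : ℝ × ℝ, t ≠ 0 →
      DifferentiableAt ℝ (fun x => g0 (x, t.2)) t.1 ∧
      DifferentiableAt ℝ (fun y => g0 (t.1, y)) t.2)
    (hg : ∀ t : ℝ × ℝ, t ≠ 0 → |g0 t| ≤ C * rho q1 q2 t ^ χ)
    (hd1 : ∀ t : ℝ × ℝ, t ≠ 0 →
      |deriv (fun x => g0 (x, t.2)) t.1| ≤ C * rho q1 q2 t ^ (χ - 1 / q1))
    (hd2 : ∀ t : ℝ × ℝ, t ≠ 0 →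
      |deriv (fun y => g0 (t.1, y)) t.2| ≤ C * rho q1 q2 t ^ (χ - 1 / q2)) :
    ∀ t : ℝ × ℝ,
      Integrable (fun u : ℝ × ℝ =>
        |g0 (t.1 - u.1, t.2 - u.2) - g0 (-u.1, -u.2)| ^ α) volume :=
  stmt_19_general hα0 hq1 hq2 hχlow hχhigh hdiff hg hd1 hd2
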